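/- arXiv:2412.17181 — 3 statements merged into one kernel-verified Lean document; each statement's English description precedes it below -/
import Mathlib

section
/- For all integers n ≥ 1 and M ≥ 1 and every p ∈ [0,1], if S ~ Binomial(n,p) then P(S ≤ M) ≤ e·exp( −np / max(2M, 8) ). -/
/-!
Markov's inequality for `x ^ S` with `0 ≤ x ≤ 1` gives
`x ^ M * P(S ≤ M) ≤ E[x ^ S] = (x * p + (1 - p)) ^ n`. At `x = M / (M + 1)` the right-hand side is
`(1 - p / (M + 1)) ^ n ≤ exp (-n * p / (M + 1))`, while `x ^ (-M) = (1 + 1 / M) ^ M ≤ e`.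
-/

section OrderedSemiring

variable {R : Type*} [CommSemiring R] [PartialOrder R] [IsOrderedRing R]

theorem sum_choose_mul_pow_mul_pow_le_add_pow {a b : R} (ha : 0 ≤ a) (hb : 0 ≤ b) (n : ℕ)
    (s : Finset ℕ) :
    ∑ k ∈ s, (n.choose k : R) * a ^ k * b ^ (n - k) ≤ (a + b) ^ n := by
  have choose_support : ∀ k ∈ s, (n.choose k : R) * a ^ k * b ^ (n - k) ≠ 0 → k ≤ n := by
    intro k _ hk
    contrapose! hk
    simp [Nat.choose_eq_zero_of_lt hk]
  calc ∑ k ∈ s, (n.choose k : R) * a ^ k * b ^ (n - k)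
      = ∑ k ∈ s with k ≤ n, (n.choose k : R) * a ^ k * b ^ (n - k) :=
        (Finset.sum_filter_of_ne choose_support).symm
    _ ≤ ∑ k ∈ Finset.range (n + 1), (n.choose k : R) * a ^ k * b ^ (n - k) := by
        refine Finset.sum_le_sum_of_subset_of_nonneg (fun k hk ↦ ?_) fun k _ _ ↦ by positivity
        exact Finset.mem_range_succ_iff.2 (Finset.mem_filter.1 hk).2
    _ = (a + b) ^ n := by
        rw [add_pow]
        exact Finset.sum_congr rfl fun k _ ↦ by ring

theorem pow_mul_sum_range_choose_le_mul_add_pow {x a b : R} (hx0 : 0 ≤ x) (hx1 : x ≤ 1)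
    (ha : 0 ≤ a) (hb : 0 ≤ b) (n M : ℕ) :
    x ^ M * ∑ k ∈ Finset.range (M + 1), (n.choose k : R) * a ^ k * b ^ (n - k) ≤
      (x * a + b) ^ n := by
  calc x ^ M * ∑ k ∈ Finset.range (M + 1), (n.choose k : R) * a ^ k * b ^ (n - k)
      = ∑ k ∈ Finset.range (M + 1), x ^ M * ((n.choose k : R) * a ^ k * b ^ (n - k)) :=
        Finset.mul_sum ..
    _ ≤ ∑ k ∈ Finset.range (M + 1), x ^ k * ((n.choose k : R) * a ^ k * b ^ (n - k)) := by
        refine Finset.sum_le_sum fun k hk ↦ mul_le_mul_of_nonneg_right ?_ (by positivity)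
        exact pow_le_pow_of_le_one hx0 hx1 (Finset.mem_range_succ_iff.1 hk)
    _ = ∑ k ∈ Finset.range (M + 1), (n.choose k : R) * (x * a) ^ k * b ^ (n - k) :=
        Finset.sum_congr rfl fun k _ ↦ by ring
    _ ≤ (x * a + b) ^ n :=
        sum_choose_mul_pow_mul_pow_le_add_pow (mul_nonneg hx0 ha) hb n _

end OrderedSemiring

theorem one_le_exp_one_mul_div_add_one_pow (M : ℕ) :
    1 ≤ Real.exp 1 * ((M : ℝ) / (M + 1)) ^ M := by
  rcases M.eq_zero_or_pos with rfl | hM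
  · simp
  calc (1 : ℝ) = (1 + (M : ℝ)⁻¹) ^ M * ((M : ℝ) / (M + 1)) ^ M := by
        rw [← mul_pow, show (1 + (M : ℝ)⁻¹) * (M / (M + 1)) = 1 by field_simp, one_pow]
    _ ≤ Real.exp 1 * ((M : ℝ) / (M + 1)) ^ M := by
        gcongr
        exact Real.one_add_inv_pow_le_exp

theorem one_sub_pow_le_exp_neg_mul {y : ℝ} (hy : y ≤ 1) (n : ℕ) :
    (1 - y) ^ n ≤ Real.exp (-(n * y)) := by
  calc (1 - y) ^ n ≤ Real.exp (-y) ^ n :=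
        pow_le_pow_left₀ (sub_nonneg.2 hy) (Real.one_sub_le_exp_neg y) n
    _ = Real.exp (-(n * y)) := by rw [← Real.exp_nat_mul, mul_neg]

theorem binomial_lower_tail_bound_general (n M : ℕ) {p : ℝ} (hp0 : 0 ≤ p) (hp1 : p ≤ 1) :
    ∑ k ∈ Finset.range (M + 1), (n.choose k : ℝ) * p ^ k * (1 - p) ^ (n - k) ≤
      Real.exp 1 * Real.exp (-((n : ℝ) * p) / (M + 1)) := by
  have hq : 0 ≤ 1 - p := sub_nonneg.2 hp1
  set x : ℝ := M / (M + 1) with hx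
  set tail := ∑ k ∈ Finset.range (M + 1), (n.choose k : ℝ) * p ^ k * (1 - p) ^ (n - k)
  have hx0 : 0 ≤ x := by positivity
  have hx1 : x ≤ 1 := div_le_one_of_le₀ (by linarith) (by positivity)
  have tail_nonneg : 0 ≤ tail := Finset.sum_nonneg fun k _ ↦ by positivity
  have hp_div : p / (M + 1) ≤ 1 :=
    div_le_one_of_le₀ (by linarith [M.cast_nonneg (α := ℝ)]) (by positivity)
  calc tail ≤ Real.exp 1 * x ^ M * tail :=
        le_mul_of_one_le_left tail_nonneg (one_le_exp_one_mul_div_add_one_pow M)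
    _ = Real.exp 1 * (x ^ M * tail) := mul_assoc ..
    _ ≤ Real.exp 1 * (x * p + (1 - p)) ^ n := by
        gcongr
        exact pow_mul_sum_range_choose_le_mul_add_pow hx0 hx1 hp0 hq n M
    _ = Real.exp 1 * (1 - p / (M + 1)) ^ n := by
        rw [show x * p + (1 - p) = 1 - p / (M + 1) by rw [hx]; field_simp; ring]
    _ ≤ Real.exp 1 * Real.exp (-(n * (p / (M + 1)))) := by
        gcongr
        exact one_sub_pow_le_exp_neg_mul hp_div n
    _ = Real.exp 1 * Real.exp (-((n : ℝ) * p) / (M + 1)) := by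
        rw [← mul_div_assoc, neg_div]

/-- **Chernoff-type lower-tail bound for the binomial distribution.**  For all integers
`n ≥ 1` and `M ≥ 1` and every success probability `p ∈ [0,1]`, if `S ~ Binomial(n,p)` then
`P(S ≤ M) = ∑_{k ≤ M} C(n,k) p^k (1−p)^{n−k} ≤ e · exp(−np / max(2M, 8))`. -/
theorem binomial_lower_tail_bound (n M : ℕ) (hn : 1 ≤ n) (hM : 1 ≤ M)
    (p : ℝ) (hp0 : 0 ≤ p) (hp1 : p ≤ 1) :
    ∑ k ∈ Finset.range (M + 1), (n.choose k : ℝ) * p ^ k * (1 - p) ^ (n - k) ≤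
      Real.exp 1 * Real.exp (-((n : ℝ) * p) / max (2 * (M : ℝ)) 8) := by
  have hM' : (M : ℝ) + 1 ≤ max (2 * (M : ℝ)) 8 :=
    le_max_of_le_left (by linarith [Nat.one_le_cast (α := ℝ).2 hM])
  refine (binomial_lower_tail_bound_general n M hp0 hp1).trans ?_
  rw [neg_div, neg_div]
  gcongr
end

section
/- Let m ∈ ℕ and let Q be a probability measure on ℝ^m that is absolutely continuous with respect to Lebesgue measure with density bounded above by g_max < ∞. Then there exists a constant C > 0, depending only on m and g_max, such that for all β ≥ 1, all x ∈ ℝ^m and all r ≥ 0, ∫_{ℝ^m ∖ B(x,r)} exp(−β·‖x−y‖^m) Q(dy) ≤ (C/β)·exp(−β·r^m/2). -/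
open MeasureTheory
open scoped ENNReal

/-!
In polar coordinates the mass of `exp (-β ‖x - y‖ ^ m)` outside a ball reduces to
`∫ t in Ioi r, t ^ (m - 1) * exp (-β * t ^ m)`. The power of `‖x - y‖` is the dimension, so the
Jacobian `t ^ (m - 1)` makes the integrand an exact derivative: the mass with respect to Lebesgue
measure is exactly `vol (B(0, 1)) / β * exp (-β * r ^ m)`, and a density bounded by `gmax` costs at
most a factor `gmax`.
-/

open Filter Metric Module Set Topology
open scoped NNReal

lemma integral_Ioi_pow_mul_exp_neg_mul_pow {n : ℕ} (hn : n ≠ 0) {b : ℝ} (hb : 0 < b)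
    {r : ℝ} (hr : 0 ≤ r) :
    ∫ t in Ioi r, t ^ (n - 1) * Real.exp (-b * t ^ n) = Real.exp (-b * r ^ n) / (n * b) := by
  have hderiv : ∀ t ∈ Ici r, HasDerivAt (fun t : ℝ ↦ -(Real.exp (-b * t ^ n) / (n * b)))
      (t ^ (n - 1) * Real.exp (-b * t ^ n)) t := by
    intro t _
    convert! ((((hasDerivAt_pow n t).const_mul (-b)).exp).div_const (n * b)).neg using 1
    field_simp
  have hnonneg : ∀ t ∈ Ioi r, 0 ≤ t ^ (n - 1) * Real.exp (-b * t ^ n) := fun t ht ↦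
    mul_nonneg (pow_nonneg (hr.trans ht.le) _) (Real.exp_pos _).le
  have hlim : Tendsto (fun t : ℝ ↦ -(Real.exp (-b * t ^ n) / (n * b))) atTop (𝓝 0) := by
    have hexponent : Tendsto (fun t : ℝ ↦ -b * t ^ n) atTop atBot :=
      (tendsto_pow_atTop hn).const_mul_atTop_of_neg (neg_neg_of_pos hb)
    simpa only [Function.comp_def, zero_div, neg_zero] using
      ((Real.tendsto_exp_atBot.comp hexponent).div_const (n * b)).neg
  rw [integral_Ioi_of_hasDerivAt_of_nonneg' hderiv hnonneg hlim, zero_sub, neg_neg]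

section HaarMeasure

variable {E : Type*} [NormedAddCommGroup E] [NormedSpace ℝ E] [FiniteDimensional ℝ E]
  [MeasurableSpace E] [BorelSpace E] (μ : Measure E) [μ.IsAddHaarMeasure]

lemma setIntegral_compl_closedBall_fun_norm_sub [Nontrivial E] {F : Type*}
    [NormedAddCommGroup F] [NormedSpace ℝ F] (g : ℝ → F) (x : E) {r : ℝ} (hr : 0 ≤ r) :
    ∫ y in (closedBall x r)ᶜ, g ‖x - y‖ ∂μ =
      finrank ℝ E • μ.real (ball 0 1) • ∫ t in Ioi r, t ^ (finrank ℝ E - 1) • g t := by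
  have hradial : (closedBall x r)ᶜ.indicator (fun y ↦ g ‖x - y‖) =
      fun y ↦ (Ioi r).indicator g ‖x - y‖ := by
    ext y
    simp only [indicator, mem_compl_iff, mem_closedBall, not_le, mem_Ioi, dist_eq_norm_sub']
  calc ∫ y in (closedBall x r)ᶜ, g ‖x - y‖ ∂μ
      = ∫ y, (Ioi r).indicator g ‖x - y‖ ∂μ := by
        rw [← integral_indicator measurableSet_closedBall.compl, hradial]
    _ = ∫ z, (Ioi r).indicator g ‖z‖ ∂μ :=
        integral_sub_left_eq_self (fun z ↦ (Ioi r).indicator g ‖z‖) μ x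
    _ = finrank ℝ E • μ.real (ball 0 1) •
          ∫ t in Ioi 0, (Ioi r).indicator (fun t ↦ t ^ (finrank ℝ E - 1) • g t) t := by
        simp only [integral_fun_norm_addHaar, indicator_smul]
    _ = _ := by
        rw [setIntegral_indicator measurableSet_Ioi, Ioi_inter_Ioi, max_eq_right hr]

lemma setIntegral_compl_closedBall_exp_neg_mul_norm_sub_pow [Nontrivial E] {β : ℝ} (hβ : 0 < β)
    (x : E) {r : ℝ} (hr : 0 ≤ r) :
    ∫ y in (closedBall x r)ᶜ, Real.exp (-β * ‖x - y‖ ^ finrank ℝ E) ∂μ =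
      μ.real (ball 0 1) / β * Real.exp (-β * r ^ finrank ℝ E) := by
  have hdim : finrank ℝ E ≠ 0 := finrank_pos.ne'
  rw [setIntegral_compl_closedBall_fun_norm_sub μ
    (fun t ↦ Real.exp (-β * t ^ finrank ℝ E)) x hr]
  simp only [smul_eq_mul, nsmul_eq_mul, integral_Ioi_pow_mul_exp_neg_mul_pow hdim hβ hr]
  field_simp

lemma integrableOn_compl_closedBall_exp_neg_mul_norm_sub_pow [Nontrivial E] {β : ℝ} (hβ : 0 < β)
    (x : E) {r : ℝ} (hr : 0 ≤ r) :
    IntegrableOn (fun y ↦ Real.exp (-β * ‖x - y‖ ^ finrank ℝ E)) (closedBall x r)ᶜ μ := by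
  -- The integral of a non-integrable function is `0` by convention, and this one is positive.
  refine Integrable.of_integral_ne_zero ?_
  rw [setIntegral_compl_closedBall_exp_neg_mul_norm_sub_pow μ hβ x hr]
  have hball : 0 < μ.real (ball (0 : E) 1) :=
    ENNReal.toReal_pos (measure_ball_pos μ 0 one_pos).ne' measure_ball_lt_top.ne
  positivity

variable {μ}

lemma setIntegral_compl_closedBall_exp_neg_mul_norm_sub_pow_le {c : ℝ≥0} {Q : Measure E}
    (hQ : Q ≤ c • μ) {β : ℝ} (hβ : 0 < β) (x : E) {r : ℝ} (hr : 0 ≤ r) :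
    ∫ y in (closedBall x r)ᶜ, Real.exp (-β * ‖x - y‖ ^ finrank ℝ E) ∂Q ≤
      c * μ.real (ball 0 1) / β * Real.exp (-β * r ^ finrank ℝ E) := by
  rcases subsingleton_or_nontrivial E with _ | _
  · have hempty : (closedBall x r)ᶜ = ∅ :=
      compl_empty_iff.2 (Subsingleton.eq_univ_of_nonempty ⟨x, mem_closedBall_self hr⟩)
    rw [hempty, setIntegral_empty]
    positivity
  · have hrestrict : Q.restrict (closedBall x r)ᶜ ≤ c • μ.restrict (closedBall x r)ᶜ :=
      (Measure.restrict_mono_measure hQ _).trans_eq (Measure.restrict_smul c μ _)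
    calc ∫ y in (closedBall x r)ᶜ, Real.exp (-β * ‖x - y‖ ^ finrank ℝ E) ∂Q
        ≤ ∫ y, Real.exp (-β * ‖x - y‖ ^ finrank ℝ E) ∂(c • μ.restrict (closedBall x r)ᶜ) :=
          integral_mono_measure hrestrict (ae_of_all _ fun _ ↦ (Real.exp_pos _).le)
            ((integrableOn_compl_closedBall_exp_neg_mul_norm_sub_pow μ hβ x hr).smul_measure_nnreal)
      _ = c * (μ.real (ball 0 1) / β * Real.exp (-β * r ^ finrank ℝ E)) := by
          rw [integral_smul_nnreal_measure,
            setIntegral_compl_closedBall_exp_neg_mul_norm_sub_pow μ hβ x hr, NNReal.smul_def,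
            smul_eq_mul]
      _ = c * μ.real (ball 0 1) / β * Real.exp (-β * r ^ finrank ℝ E) := by ring

variable (μ)

theorem integral_exp_decay_outside_ball_general (gmax : ℝ≥0) :
    ∃ C : ℝ, 0 < C ∧
      ∀ f : E → ℝ≥0∞, (∀ᵐ y ∂μ, f y ≤ gmax) →
      ∀ β : ℝ, 0 < β → ∀ x : E, ∀ r : ℝ, 0 ≤ r →
        ∫ y in (closedBall x r)ᶜ, Real.exp (-β * ‖x - y‖ ^ finrank ℝ E) ∂μ.withDensity f ≤
          C / β * Real.exp (-β * r ^ finrank ℝ E) := by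
  refine ⟨gmax * μ.real (ball 0 1) + 1, by positivity, fun f hf β hβ x r hr ↦ ?_⟩
  have hdominated : μ.withDensity f ≤ gmax • μ :=
    (withDensity_mono hf).trans_eq (withDensity_const _)
  refine (setIntegral_compl_closedBall_exp_neg_mul_norm_sub_pow_le hdominated hβ x hr).trans ?_
  gcongr
  exact le_add_of_nonneg_right zero_le_one

end HaarMeasure

/-- **Lemma (integral of an exponentially decaying kernel outside a ball).**  Let `Q` be a
probability measure on `ℝ^m` that is absolutely continuous with respect to Lebesgue measure
with density bounded above by `g_max < ∞`.  Then there is a constant `C > 0`, depending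
only on `m` and `g_max`, such that for all `β ≥ 1`, all `x ∈ ℝ^m` and all `r ≥ 0`,
`∫_{ℝ^m ∖ B(x,r)} exp(−β ‖x−y‖^m) Q(dy) ≤ (C/β) exp(−β r^m / 2)`. -/
theorem integral_exp_decay_outside_ball (m : ℕ) (gmax : ℝ) (hgmax : 0 ≤ gmax) :
    ∃ C : ℝ, 0 < C ∧
      ∀ (f : EuclideanSpace ℝ (Fin m) → ℝ≥0∞), (∀ x, f x ≤ ENNReal.ofReal gmax) →
      ∀ Q : Measure (EuclideanSpace ℝ (Fin m)), IsProbabilityMeasure Q →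
        Q = MeasureTheory.volume.withDensity f →
        ∀ β : ℝ, 1 ≤ β → ∀ x : EuclideanSpace ℝ (Fin m), ∀ r : ℝ, 0 ≤ r →
          ∫ y in (Metric.closedBall x r)ᶜ, Real.exp (-β * ‖x - y‖ ^ m) ∂Q ≤
            C / β * Real.exp (-β * r ^ m / 2) := by
  obtain ⟨C, hC, hbound⟩ := integral_exp_decay_outside_ball_general
    (volume : Measure (EuclideanSpace ℝ (Fin m))) gmax.toNNReal
  simp only [finrank_euclideanSpace_fin] at hbound
  refine ⟨C, hC, fun f hf Q _ hQ β hβ x r hr ↦ hQ ▸ ?_⟩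
  have hβ_pos : 0 < β := one_pos.trans_le hβ
  refine (hbound f (ae_of_all _ hf) β hβ_pos x r hr).trans ?_
  gcongr
  linarith [show 0 ≤ β * r ^ m by positivity]
end

section
/- Let Z be a standard normal random variable. For every a > 0, the Kolmogorov distance between aZ and Z satisfies sup_{t∈ℝ} |P(aZ ≤ t) − P(Z ≤ t)| ≤ max(a, a⁻¹) − 1. -/
open ProbabilityTheory

/-!
The only property of the Gaussian law that matters is that it is unimodal at `0`: its distribution
function `F` is convex on `(-∞, 0]` and concave on `[0, ∞)`. For `c ≥ 1` and `u ≥ 0`, concavity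
along the segment from `0` through `u` to `c u` gives
`F (c u) - F u ≤ (c - 1) (F u - F 0) ≤ c - 1`, and convexity gives the mirror image for `u ≤ 0`.
The two cases `a ≥ 1` and `a ≤ 1` of the theorem are this inequality with `(c, u) = (a, t / a)` and
`(c, u) = (a⁻¹, t)`.
-/

open MeasureTheory Set
open scoped NNReal

section Convexity

variable {𝕜 E : Type*} [Field 𝕜] [LinearOrder 𝕜] [IsStrictOrderedRing 𝕜] [AddCommGroup E]
  [Module 𝕜 E] {s : Set E} {f : E → 𝕜} {c : 𝕜} {u : E}

lemma map_smul_sub_le_of_concaveOn (hf : ConcaveOn 𝕜 s f) (h0 : 0 ∈ s) (hc : 1 ≤ c)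
    (hcu : c • u ∈ s) : f (c • u) - f u ≤ (c - 1) * (f u - f 0) := by
  have hc0 : 0 < c := one_pos.trans_le hc
  have hconcave : c⁻¹ * f (c • u) + (1 - c⁻¹) * f 0 ≤ f u := by
    simpa [smul_smul, hc0.ne'] using
      hf.2 hcu h0 (inv_nonneg.2 hc0.le) (sub_nonneg.2 (inv_le_one_of_one_le₀ hc))
        (add_sub_cancel c⁻¹ 1)
  have hscaled : f (c • u) + (c - 1) * f 0 ≤ c * f u := by
    calc f (c • u) + (c - 1) * f 0 = c * (c⁻¹ * f (c • u) + (1 - c⁻¹) * f 0) := by field_simp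
      _ ≤ c * f u := by gcongr
  linarith

lemma sub_map_smul_le_of_convexOn (hf : ConvexOn 𝕜 s f) (h0 : 0 ∈ s) (hc : 1 ≤ c)
    (hcu : c • u ∈ s) : f u - f (c • u) ≤ (c - 1) * (f 0 - f u) := by
  simpa [neg_add_eq_sub] using map_smul_sub_le_of_concaveOn hf.neg h0 hc hcu

end Convexity

/-- Unimodality of a probability measure on `ℝ` with mode `m`, in Khinchin's sense: the distribution
function is convex before `m` and concave after `m`. No density is required, and an atom at `m` is
allowed. -/
structure IsUnimodalAt (μ : Measure ℝ) (m : ℝ) : Prop extends IsProbabilityMeasure μ where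
  convexOn_cdf : ConvexOn ℝ (Iic m) (cdf μ)
  concaveOn_cdf : ConcaveOn ℝ (Ici m) (cdf μ)

lemma IsUnimodalAt.abs_cdf_mul_sub_cdf_le {μ : Measure ℝ} (hμ : IsUnimodalAt μ 0) {c : ℝ}
    (hc : 1 ≤ c) (u : ℝ) : |cdf μ (c * u) - cdf μ u| ≤ c - 1 := by
  have hc0 : 0 ≤ c := zero_le_one.trans hc
  have hcdf_sub_le_one (x y : ℝ) : cdf μ x - cdf μ y ≤ 1 := by
    linarith [cdf_le_one μ x, cdf_nonneg μ y]
  rcases le_total 0 u with hu | hu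
  · rw [abs_of_nonneg (sub_nonneg.2 (monotone_cdf μ (le_mul_of_one_le_left hu hc)))]
    calc cdf μ (c * u) - cdf μ u ≤ (c - 1) * (cdf μ u - cdf μ 0) :=
          map_smul_sub_le_of_concaveOn hμ.concaveOn_cdf self_mem_Ici hc (mul_nonneg hc0 hu)
      _ ≤ c - 1 := mul_le_of_le_one_right (sub_nonneg.2 hc) (hcdf_sub_le_one u 0)
  · rw [abs_sub_comm, abs_of_nonneg (sub_nonneg.2 (monotone_cdf μ (mul_le_of_one_le_left hu hc)))]
    calc cdf μ u - cdf μ (c * u) ≤ (c - 1) * (cdf μ 0 - cdf μ u) :=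
          sub_map_smul_le_of_convexOn hμ.convexOn_cdf self_mem_Iic hc
            (mul_nonpos_of_nonneg_of_nonpos hc0 hu)
      _ ≤ c - 1 := mul_le_of_le_one_right (sub_nonneg.2 hc) (hcdf_sub_le_one 0 u)

theorem gaussian_scaling_kolmogorov_bound_general {μ : Measure ℝ} (hμ : IsUnimodalAt μ 0) {a : ℝ}
    (ha : 0 < a) : ⨆ t : ℝ, |cdf μ (t / a) - cdf μ t| ≤ max a a⁻¹ - 1 := by
  refine ciSup_le fun t ↦ ?_
  rcases le_total 1 a with h | h
  · calc |cdf μ (t / a) - cdf μ t| = |cdf μ (a * (t / a)) - cdf μ (t / a)| := by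
          rw [mul_div_cancel₀ t ha.ne', abs_sub_comm]
      _ ≤ a - 1 := hμ.abs_cdf_mul_sub_cdf_le h _
      _ ≤ max a a⁻¹ - 1 := by gcongr; exact le_max_left _ _
  · calc |cdf μ (t / a) - cdf μ t| = |cdf μ (a⁻¹ * t) - cdf μ t| := by rw [inv_mul_eq_div]
      _ ≤ a⁻¹ - 1 := hμ.abs_cdf_mul_sub_cdf_le ((one_le_inv₀ ha).2 h) t
      _ ≤ max a a⁻¹ - 1 := by gcongr; exact le_max_right _ _

lemma hasDerivAt_setIntegral_Iic {E : Type*} [NormedAddCommGroup E] [NormedSpace ℝ E]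
    [CompleteSpace E] {f : ℝ → E} (hf : Integrable f) {x : ℝ} (hx : ContinuousAt f x) :
    HasDerivAt (fun t ↦ ∫ y in Iic t, f y) (f x) x := by
  have hsplit (t : ℝ) : ∫ y in Iic t, f y = (∫ y in Iic x, f y) + ∫ y in x..t, f y := by
    rw [← intervalIntegral.integral_Iic_sub_Iic hf.integrableOn hf.integrableOn, add_sub_cancel]
  rw [funext hsplit]
  exact (intervalIntegral.integral_hasDerivAt_right hf.intervalIntegrable
    hf.aestronglyMeasurable.stronglyMeasurableAtFilter hx).const_add _

section Gaussian

variable (m : ℝ) {v : ℝ≥0}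

lemma cdf_gaussianReal_eq_integral (hv : v ≠ 0) (t : ℝ) :
    cdf (gaussianReal m v) t = ∫ x in Iic t, gaussianPDFReal m v x := by
  rw [cdf_eq_real, measureReal_def, gaussianReal_apply_eq_integral m hv,
    ENNReal.toReal_ofReal (integral_nonneg (gaussianPDFReal_nonneg m v))]

lemma continuous_gaussianPDFReal (v : ℝ≥0) : Continuous (gaussianPDFReal m v) := by
  unfold gaussianPDFReal
  fun_prop

lemma hasDerivAt_cdf_gaussianReal (hv : v ≠ 0) (x : ℝ) :
    HasDerivAt (cdf (gaussianReal m v)) (gaussianPDFReal m v x) x := by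
  rw [funext (cdf_gaussianReal_eq_integral m hv)]
  exact hasDerivAt_setIntegral_Iic (integrable_gaussianPDFReal m v)
    (continuous_gaussianPDFReal m v).continuousAt

lemma gaussianPDFReal_le_of_abs_sub_le (v : ℝ≥0) {x y : ℝ} (h : |x - m| ≤ |y - m|) :
    gaussianPDFReal m v y ≤ gaussianPDFReal m v x := by
  have hsq : (x - m) ^ 2 ≤ (y - m) ^ 2 := sq_le_sq.2 h
  unfold gaussianPDFReal
  gcongr

lemma monotoneOn_gaussianPDFReal (v : ℝ≥0) : MonotoneOn (gaussianPDFReal m v) (Iic m) :=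
  fun _ _ _ hy hxy ↦ gaussianPDFReal_le_of_abs_sub_le m v <|
    abs_le_abs_of_nonpos (sub_nonpos.2 hy) (sub_le_sub_right hxy m)

lemma antitoneOn_gaussianPDFReal (v : ℝ≥0) : AntitoneOn (gaussianPDFReal m v) (Ici m) :=
  fun _ hx _ _ hxy ↦ gaussianPDFReal_le_of_abs_sub_le m v <|
    abs_le_abs_of_nonneg (sub_nonneg.2 hx) (sub_le_sub_right hxy m)

lemma isUnimodalAt_gaussianReal (hv : v ≠ 0) : IsUnimodalAt (gaussianReal m v) m := by
  have hdiff : Differentiable ℝ (cdf (gaussianReal m v)) :=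
    fun x ↦ (hasDerivAt_cdf_gaussianReal m hv x).differentiableAt
  have hderiv : deriv (cdf (gaussianReal m v)) = gaussianPDFReal m v :=
    funext fun x ↦ (hasDerivAt_cdf_gaussianReal m hv x).deriv
  refine ⟨inferInstance, ?_, ?_⟩
  · refine MonotoneOn.convexOn_of_deriv (convex_Iic m) hdiff.continuous.continuousOn
      hdiff.differentiableOn ?_
    rw [hderiv]
    exact (monotoneOn_gaussianPDFReal m v).mono interior_subset
  · refine AntitoneOn.concaveOn_of_deriv (convex_Ici m) hdiff.continuous.continuousOn
      hdiff.differentiableOn ?_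
    rw [hderiv]
    exact (antitoneOn_gaussianPDFReal m v).mono interior_subset

end Gaussian

/-- **Kolmogorov distance between a scaled standard Gaussian and a standard Gaussian.**
For `Z ~ N(0,1)` and every `a > 0`, `sup_t |P(aZ ≤ t) − P(Z ≤ t)|
= sup_t |Φ(t/a) − Φ(t)| ≤ max(a, a⁻¹) − 1`. -/
theorem gaussian_scaling_kolmogorov_bound (a : ℝ) (ha : 0 < a) :
    (⨆ t : ℝ,
        |((gaussianReal 0 1) (Set.Iic (t / a))).toReal -
          ((gaussianReal 0 1) (Set.Iic t)).toReal|) ≤ max a a⁻¹ - 1 := by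
  simpa only [cdf_eq_real, measureReal_def] using
    gaussian_scaling_kolmogorov_bound_general (isUnimodalAt_gaussianReal 0 one_ne_zero) ha
end
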